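/- Suppose the covariate density g is bounded, bounded away from zero on [0,1], and its restriction to [0,1] is continuous, and the kernel w is a symmetric density with compact support [−1,1] and positive on a set of positive measure near 0 (as guaranteed by Assumption W). Let c_n → 0. For x ∈ [0,1] let Q̄_n(x) be the (d+1)×(d+1) matrix with (k,m)-entry ∫ g(x + c_n t) t^{k+m} w(t) dt. Then there exists η > 0 such that for all n and all x ∈ [0,1], all eigenvalues of Q̄_n(x) lie in the interval [η, (d+1)‖g‖_∞]; in particular Q̄_n(x) is invertible and sup_{0≤x≤1} ‖Q̄_n(x)^{−1}‖ ≤ 1/η. -/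

import Mathlib

open MeasureTheory Filter

/-- `q̄_{nm}(x) = ∫ g(x + c t) t^m w(t) dt`. -/
noncomputable def qbar (g w : ℝ → ℝ) (c : ℝ) (m : ℕ) (x : ℝ) : ℝ :=
  ∫ t, g (x + c * t) * t ^ m * w t

/-- The matrix `Q̄_n(x)` with `(k,m)`-entry `q̄_{n,k+m}(x)`. -/
noncomputable def Qbar (g w : ℝ → ℝ) (c : ℝ) (d : ℕ) (x : ℝ) :
    Matrix (Fin (d + 1)) (Fin (d + 1)) ℝ :=
  Matrix.of fun k m : Fin (d + 1) => qbar g w c ((k : ℕ) + (m : ℕ)) x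

/-- The ℓ²→ℓ² operator norm of a real square matrix. -/
noncomputable def opNorm {k : ℕ} (M : Matrix (Fin k) (Fin k) ℝ) : ℝ :=
  ⨆ v : {v : Fin k → ℝ // ∑ i, v i ^ 2 ≤ 1}, Real.sqrt (∑ i, (M.mulVec v i) ^ 2)


lemma aux_int (w : ℝ → ℝ) (hw0 : ∀ x, 0 ≤ w x)
    (hwsupp : Function.support w ⊆ Set.Icc (-1) 1) (f : ℝ → ℝ) (hf : Integrable f)
    (hfw : ∀ t, w t = 0 → f t = 0) (m : ℕ) : Integrable fun t => t ^ m * f t := by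
  refine Integrable.mono' hf.norm
    ((by fun_prop : AEStronglyMeasurable (fun t : ℝ => t ^ m) volume).mul hf.1) ?_
  refine Eventually.of_forall fun t => ?_
  by_cases h : w t = 0
  · simp [hfw t h]
  · have ht := hwsupp h
    rw [norm_mul]
    have : ‖t ^ m‖ ≤ 1 := by
      rw [norm_pow]
      exact pow_le_one₀ (norm_nonneg _) (by rw [Real.norm_eq_abs, abs_le]; exact ht)
    nlinarith [norm_nonneg (f t)]

lemma aux_expand {k : ℕ} (v : Fin k → ℝ) (t y : ℝ) :
    (∑ i, v i * t ^ (i : ℕ)) ^ 2 * y = ∑ i, ∑ j, v i * v j * (t ^ ((i : ℕ) + (j : ℕ)) * y) := by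
  rw [sq, Finset.sum_mul_sum, Finset.sum_mul]
  refine Finset.sum_congr rfl fun i _ => ?_
  rw [Finset.sum_mul]
  refine Finset.sum_congr rfl fun j _ => ?_
  ring

lemma aux_sq_int {k : ℕ} (f : ℝ → ℝ) (hf : ∀ m : ℕ, Integrable fun t => t ^ m * f t)
    (v : Fin k → ℝ) : Integrable fun t => (∑ i, v i * t ^ (i : ℕ)) ^ 2 * f t := by
  simp_rw [aux_expand]
  exact integrable_finsetSum _ fun i _ => integrable_finsetSum _ fun j _ => (hf _).const_mul _

lemma aux_quad {k : ℕ} (f : ℝ → ℝ) (hf : ∀ m : ℕ, Integrable fun t => t ^ m * f t)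
    (v : Fin k → ℝ) :
    ∫ t, (∑ i, v i * t ^ (i : ℕ)) ^ 2 * f t =
      ∑ i : Fin k, ∑ j : Fin k, v i * v j * ∫ t, t ^ ((i : ℕ) + (j : ℕ)) * f t := by
  simp_rw [aux_expand]
  rw [integral_finsetSum _ fun i _ => integrable_finsetSum _ fun j _ => (hf _).const_mul _]
  refine Finset.sum_congr rfl fun i _ => ?_
  rw [integral_finsetSum _ fun j _ => (hf _).const_mul _]
  refine Finset.sum_congr rfl fun j _ => ?_
  rw [integral_const_mul]

lemma aux_pos {k : ℕ} (f : ℝ → ℝ) (hf0 : ∀ t, 0 ≤ f t)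
    (hf : ∀ m : ℕ, Integrable fun t => t ^ m * f t)
    (hpos : 0 < volume {t : ℝ | 0 < f t}) (v : Fin k → ℝ) (hv : v ≠ 0) :
    0 < ∫ t, (∑ i, v i * t ^ (i : ℕ)) ^ 2 * f t := by
  have hnn : ∀ t, 0 ≤ (∑ i, v i * t ^ (i : ℕ)) ^ 2 * f t := fun t => mul_nonneg (sq_nonneg _) (hf0 t)
  refine lt_of_le_of_ne (integral_nonneg hnn) fun h0 => ?_
  have h1 := (integral_eq_zero_iff_of_nonneg hnn (aux_sq_int f hf v)).1 h0.symm
  let p : Polynomial ℝ := ∑ i : Fin k, Polynomial.monomial (i : ℕ) (v i)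
  have hp : ∀ t, p.eval t = ∑ i, v i * t ^ (i : ℕ) := by
    intro t; simp [p, Polynomial.eval_finset_sum]
  have hp0 : p ≠ 0 := by
    intro h
    apply hv
    funext i
    have := congrArg (fun q => Polynomial.coeff q (i : ℕ)) h
    simpa [p, Polynomial.finset_sum_coeff, Polynomial.coeff_monomial, Fin.val_inj] using this
  have hfin : volume {t : ℝ | p.IsRoot t} = 0 :=
    (Polynomial.finite_setOf_isRoot hp0).measure_zero _
  have : volume {t : ℝ | 0 < f t} = 0 := by
    refine measure_mono_null (t := {t : ℝ | p.IsRoot t} ∪ {t | ¬ (∑ i, v i * t ^ (i : ℕ)) ^ 2 * f t = 0}) ?_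
      (measure_union_null hfin h1)
    intro t ht
    by_cases h : (∑ i, v i * t ^ (i : ℕ)) ^ 2 * f t = 0
    · left
      have : f t ≠ 0 := ne_of_gt ht
      simp only [mul_eq_zero, this, or_false] at h
      have h := pow_eq_zero_iff (two_ne_zero) |>.1 h
      show p.eval t = 0
      rw [hp, h]
    · right; exact h
  exact hpos.ne' this

lemma aux_unif {k : ℕ} (f : ℝ → ℝ) (hf0 : ∀ t, 0 ≤ f t)
    (hf : ∀ m : ℕ, Integrable fun t => t ^ m * f t)
    (hpos : 0 < volume {t : ℝ | 0 < f t}) :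
    ∃ η > (0 : ℝ), ∀ v : Fin k → ℝ,
      η * ∑ i, v i ^ 2 ≤ ∫ t, (∑ i, v i * t ^ (i : ℕ)) ^ 2 * f t := by
  have hcont : Continuous fun v : Fin k → ℝ => ∫ t, (∑ i, v i * t ^ (i : ℕ)) ^ 2 * f t := by
    simp_rw [aux_quad f hf]
    fun_prop
  have hcomp : IsCompact {v : Fin k → ℝ | ∑ i, v i ^ 2 = 1} := by
    refine Metric.isCompact_of_isClosed_isBounded (isClosed_eq (by fun_prop) (by fun_prop)) ?_
    refine (Metric.isBounded_closedBall (x := (0 : Fin k → ℝ)) (r := 1)).subset ?_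
    intro v hv
    rw [mem_closedBall_zero_iff, pi_norm_le_iff_of_nonneg zero_le_one]
    intro i
    have h1 : v i ^ 2 ≤ 1 := by
      rw [← (show ∑ i, v i ^ 2 = 1 from hv)]
      exact Finset.single_le_sum (f := fun i => v i ^ 2) (fun i _ => sq_nonneg _) (Finset.mem_univ i)
    rw [Real.norm_eq_abs]
    exact (sq_le_one_iff_abs_le_one _).1 h1
  obtain ⟨η, hη, h⟩ : ∃ η > (0 : ℝ), ∀ v ∈ {v : Fin k → ℝ | ∑ i, v i ^ 2 = 1},
      η ≤ ∫ t, (∑ i, v i * t ^ (i : ℕ)) ^ 2 * f t := by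
    rcases Set.eq_empty_or_nonempty {v : Fin k → ℝ | ∑ i, v i ^ 2 = 1} with he | hne
    · refine ⟨1, one_pos, fun v hv => ?_⟩
      rw [he] at hv; exact hv.elim
    · obtain ⟨v, hv, hmin⟩ := hcomp.exists_isMinOn hne hcont.continuousOn
      refine ⟨_, aux_pos f hf0 hf hpos v ?_, fun u hu => hmin hu⟩
      rintro rfl
      simp at hv
  refine ⟨η, hη, fun v => ?_⟩
  have hs : 0 ≤ ∑ i, v i ^ 2 := Finset.sum_nonneg fun i _ => sq_nonneg _
  rcases hs.eq_or_lt with hs | hs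
  · rw [← hs, mul_zero]
    exact integral_nonneg fun t => mul_nonneg (sq_nonneg _) (hf0 t)
  · set s := ∑ i, v i ^ 2 with hsdef
    have hr : Real.sqrt s ^ 2 = s := Real.sq_sqrt hs.le
    have hr0 : 0 < Real.sqrt s := Real.sqrt_pos.2 hs
    have := h (fun i => v i / Real.sqrt s) (by
      show ∑ i, (v i / Real.sqrt s) ^ 2 = 1
      simp_rw [div_pow, hr]
      rw [← Finset.sum_div, ← hsdef, div_self hs.ne'])
    have he : ∀ t, (∑ i, v i / Real.sqrt s * t ^ (i : ℕ)) ^ 2 * f t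
        = s⁻¹ * ((∑ i, v i * t ^ (i : ℕ)) ^ 2 * f t) := by
      intro t
      have : ∑ i, v i / Real.sqrt s * t ^ (i : ℕ) = (∑ i, v i * t ^ (i : ℕ)) / Real.sqrt s := by
        rw [Finset.sum_div]
        exact Finset.sum_congr rfl fun i _ => by ring
      rw [this, div_pow, hr]; ring
    simp_rw [he] at this
    rw [integral_const_mul, le_inv_mul_iff₀ hs] at this
    linarith

lemma aux_lin {k : ℕ} (M : Matrix (Fin k) (Fin k) ℝ) (η B : ℝ) (hη : 0 < η)
    (hlo : ∀ v : Fin k → ℝ, η * ∑ i, v i ^ 2 ≤ ∑ i, v i * M.mulVec v i)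
    (hhi : ∀ v : Fin k → ℝ, ∑ i, v i * M.mulVec v i ≤ B * ∑ i, v i ^ 2) :
    spectrum ℝ M ⊆ Set.Icc η B ∧ IsUnit M ∧ opNorm M⁻¹ ≤ 1 / η := by
  have hsp : spectrum ℝ M ⊆ Set.Icc η B := by
    intro μ hμ
    rw [← Matrix.spectrum_toLin', ← Module.End.hasEigenvalue_iff_mem_spectrum] at hμ
    obtain ⟨v, hv⟩ := hμ.exists_hasEigenvector
    have h1 : M.mulVec v = μ • v := by
      have := hv.apply_eq_smul
      rwa [Matrix.toLin'_apply] at this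
    have h2 : 0 < ∑ i, v i ^ 2 := by
      obtain ⟨i, hi⟩ := Function.ne_iff.1 hv.2
      exact Finset.sum_pos' (fun i _ => sq_nonneg _)
        ⟨i, Finset.mem_univ i, lt_of_le_of_ne (sq_nonneg _) (Ne.symm (pow_ne_zero 2 hi))⟩
    have h3 : ∑ i, v i * M.mulVec v i = μ * ∑ i, v i ^ 2 := by
      rw [h1, Finset.mul_sum]
      exact Finset.sum_congr rfl fun i _ => by simp; ring
    have := hlo v
    have := hhi v
    rw [h3] at *
    exact ⟨le_of_mul_le_mul_right ‹_› h2, le_of_mul_le_mul_right ‹_› h2⟩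
  have hu : IsUnit M := by
    have : (0 : ℝ) ∉ spectrum ℝ M := fun h => absurd (hsp h).1 (not_le.2 hη)
    exact (spectrum.zero_notMem_iff ℝ).1 this
  refine ⟨hsp, hu, ?_⟩
  have : Nonempty {v : Fin k → ℝ // ∑ i, v i ^ 2 ≤ 1} := ⟨⟨0, by simp⟩⟩
  refine ciSup_le fun ⟨v, hv⟩ => ?_
  set u := M⁻¹.mulVec v with hudef
  have hMu : M.mulVec u = v := by
    rw [hudef, Matrix.mulVec_mulVec, Matrix.mul_nonsing_inv _ ((Matrix.isUnit_iff_isUnit_det _).1 hu),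
      Matrix.one_mulVec]
  have h1 := hlo u
  rw [hMu] at h1
  have h2 := Finset.sum_mul_sq_le_sq_mul_sq Finset.univ u v
  show Real.sqrt (∑ i, u i ^ 2) ≤ 1 / η
  set s := ∑ i, u i ^ 2 with hs
  have hs0 : 0 ≤ s := Finset.sum_nonneg fun i _ => sq_nonneg _
  refine Real.sqrt_le_iff.2 ⟨by positivity, ?_⟩
  rcases hs0.eq_or_lt with h | h
  · rw [← h]; positivity
  have h3 : (η * s) ^ 2 ≤ s := by
    calc (η * s) ^ 2 ≤ (∑ i, u i * v i) ^ 2 := pow_le_pow_left₀ (by positivity) h1 2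
      _ ≤ s * ∑ i, v i ^ 2 := h2
      _ ≤ s * 1 := by gcongr
      _ = s := mul_one s
  rw [one_div, inv_pow, ← one_div, le_div_iff₀ (by positivity)]
  refine le_of_mul_le_mul_right (a := s) ?_ h
  nlinarith

/-- display (star3): under Assumptions G and W (with `w` positive on a
set of positive measure near `0`) and `c_n → 0`, there is an `η > 0` such that for all
`n` and all `x ∈ [0,1]` the eigenvalues of `Q̄_n(x)` lie in `[η, (d+1)‖g‖_∞]`; in
particular `Q̄_n(x)` is invertible and `sup_{0≤x≤1} ‖Q̄_n(x)⁻¹‖ ≤ 1/η`. -/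
theorem Qbar_eigenvalues_bounded
    (g : ℝ → ℝ)
    -- Assumption G
    (hgdens : ∀ x, 0 ≤ g x) (hgInt : Integrable g) (hgone : ∫ x, g x = 1)
    (hgbdd : ∃ C, ∀ x, g x ≤ C)
    (hglow : ∃ c₀ > (0 : ℝ), ∀ x ∈ Set.Icc (0 : ℝ) 1, c₀ ≤ g x)
    (hgcont : ContinuousOn g (Set.Icc 0 1))
    -- Assumption W, with positivity near 0
    (w : ℝ → ℝ) (hw0 : ∀ x, 0 ≤ w x) (hwInt : Integrable w) (hwdens : ∫ x, w x = 1)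
    (hwsym : ∀ x, w (-x) = w x) (hwsupp : Function.support w ⊆ Set.Icc (-1) 1)
    (hwdiff : Differentiable ℝ w) (hwderiv : ∃ M, ∀ x, |deriv w x| ≤ M)
    (hwpos : ∀ δ > (0 : ℝ), 0 < volume {t : ℝ | |t| < δ ∧ 0 < w t})
    -- order and bandwidths
    (d : ℕ) (c : ℕ → ℝ) (hcpos : ∀ n, 0 < c n) (hc0 : Tendsto c atTop (nhds 0)) :
    ∃ η > (0 : ℝ), ∀ n : ℕ, ∀ x ∈ Set.Icc (0 : ℝ) 1,
      spectrum ℝ (Qbar g w (c n) d x) ⊆ Set.Icc η (((d : ℝ) + 1) * ⨆ y : ℝ, |g y|) ∧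
      IsUnit (Qbar g w (c n) d x) ∧
      opNorm ((Qbar g w (c n) d x)⁻¹) ≤ 1 / η := by
  obtain ⟨c₀, hc₀, hlow⟩ := hglow
  obtain ⟨C, hC⟩ := hgbdd
  have hbdd : BddAbove (Set.range fun y => |g y|) := by
    refine ⟨C, ?_⟩
    rintro _ ⟨y, rfl⟩
    simpa [abs_of_nonneg (hgdens y)] using hC y
  set B := ⨆ y : ℝ, |g y| with hB
  have hgB : ∀ y, g y ≤ B := fun y => (le_abs_self _).trans (le_ciSup hbdd y)
  obtain ⟨K, hK⟩ := hc0.bddAbove_range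
  have hK : ∀ n, c n ≤ K := fun n => hK ⟨n, rfl⟩
  have hKpos : 0 < K := (hcpos 0).trans_le (hK 0)
  set δ : ℝ := 1 / (2 * K) with hδ
  have hδpos : 0 < δ := by positivity
  have hKδ : K * δ = 1 / 2 := by rw [hδ]; field_simp
  -- the two half windows
  have hsub : {t : ℝ | |t| < δ ∧ 0 < w t} ⊆
      {t | t ∈ Set.Icc 0 δ ∧ 0 < w t} ∪ {t | t ∈ Set.Icc (-δ) 0 ∧ 0 < w t} := by
    rintro t ⟨h1, h2⟩
    rw [abs_lt] at h1
    rcases le_total 0 t with h | h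
    · left; exact ⟨⟨h, h1.2.le⟩, h2⟩
    · right; exact ⟨⟨h1.1.le, h⟩, h2⟩
  have hneg : {t | t ∈ Set.Icc (-δ) 0 ∧ 0 < w t} =
      Neg.neg ⁻¹' {t : ℝ | t ∈ Set.Icc 0 δ ∧ 0 < w t} := by
    ext t
    simp only [Set.mem_setOf_eq, Set.mem_preimage, Set.mem_Icc, hwsym]
    constructor
    · rintro ⟨⟨h1, h2⟩, h3⟩; exact ⟨⟨by linarith, by linarith⟩, h3⟩
    · rintro ⟨⟨h1, h2⟩, h3⟩; exact ⟨⟨by linarith, by linarith⟩, h3⟩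
  have hvol : volume {t | t ∈ Set.Icc (-δ) 0 ∧ 0 < w t} =
      volume {t : ℝ | t ∈ Set.Icc 0 δ ∧ 0 < w t} := by
    rw [hneg, Measure.measure_preimage_neg]
  have hposR : 0 < volume {t : ℝ | t ∈ Set.Icc 0 δ ∧ 0 < w t} := by
    rw [pos_iff_ne_zero]
    intro h0
    exact (hwpos δ hδpos).ne' (measure_mono_null hsub (measure_union_null h0 (hvol.trans h0)))
  have key : ∀ S : Set ℝ, MeasurableSet S → 0 < volume {t : ℝ | t ∈ S ∧ 0 < w t} →
      (∀ m : ℕ, Integrable fun t => t ^ m * S.indicator w t) ∧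
      ∃ η > (0 : ℝ), ∀ v : Fin (d + 1) → ℝ,
      η * ∑ i, v i ^ 2 ≤ ∫ t, (∑ i, v i * t ^ (i : ℕ)) ^ 2 * S.indicator w t := by
    intro S hS hpos
    have hi := aux_int w hw0 hwsupp (S.indicator w) (hwInt.indicator hS)
      (fun t ht => by simp [Set.indicator, ht])
    refine ⟨hi, aux_unif _ (fun t => Set.indicator_nonneg (fun t _ => hw0 t) t) hi ?_⟩
    convert hpos using 3
    ext t
    by_cases h : t ∈ S <;> simp [h]
  obtain ⟨hiR, η₁, hη₁, hR⟩ := key (Set.Icc 0 δ) measurableSet_Icc hposR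
  obtain ⟨hiL, η₂, hη₂, hL⟩ := key (Set.Icc (-δ) 0) measurableSet_Icc (hvol ▸ hposR)
  refine ⟨c₀ * min η₁ η₂, mul_pos hc₀ (lt_min hη₁ hη₂), fun n x hx => ?_⟩
  set a := c n with ha
  have hapos : 0 < a := hcpos n
  have haδ : a * δ ≤ 1 / 2 := by
    rw [← hKδ]; exact mul_le_mul_of_nonneg_right (hK n) hδpos.le
  have hfInt : Integrable fun t => g (x + a * t) * w t := by
    have h1 : Integrable fun t => g (x + a * t) :=
      (hgInt.comp_add_left x).comp_mul_left' hapos.ne'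
    refine hwInt.bdd_mul h1.1 (c := B) (Eventually.of_forall fun t => ?_)
    rw [Real.norm_eq_abs, abs_of_nonneg (hgdens _)]
    exact hgB _
  have hi := aux_int w hw0 hwsupp _ hfInt (fun t ht => by simp [ht])
  have hquad : ∀ v : Fin (d + 1) → ℝ, ∑ i, v i * (Qbar g w a d x).mulVec v i =
      ∫ t, (∑ i, v i * t ^ (i : ℕ)) ^ 2 * (g (x + a * t) * w t) := by
    intro v
    rw [aux_quad _ hi]
    refine Finset.sum_congr rfl fun i _ => ?_
    rw [Matrix.mulVec, dotProduct, Finset.mul_sum]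
    refine Finset.sum_congr rfl fun j _ => ?_
    have : Qbar g w a d x i j = ∫ t, t ^ ((i : ℕ) + (j : ℕ)) * (g (x + a * t) * w t) := by
      show ∫ t, _ = _
      congr 1
      funext t
      ring
    rw [this]; ring
  have hlow' : ∀ S : Set ℝ, (∀ m : ℕ, Integrable fun t => t ^ m * S.indicator w t) →
      (∀ t ∈ S, x + a * t ∈ Set.Icc (0 : ℝ) 1) → ∀ v : Fin (d + 1) → ℝ,
      c₀ * ∫ t, (∑ i, v i * t ^ (i : ℕ)) ^ 2 * S.indicator w t ≤
        ∫ t, (∑ i, v i * t ^ (i : ℕ)) ^ 2 * (g (x + a * t) * w t) := by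
    intro S hiS hS v
    rw [← integral_const_mul]
    refine integral_mono ((aux_sq_int _ hiS v).const_mul _) (aux_sq_int _ hi v) fun t => ?_
    show c₀ * (_ ^ 2 * _) ≤ _ ^ 2 * _
    rw [mul_left_comm]
    refine mul_le_mul_of_nonneg_left ?_ (sq_nonneg _)
    by_cases h : t ∈ S
    · rw [Set.indicator_of_mem h]
      exact mul_le_mul_of_nonneg_right (hlow _ (hS t h)) (hw0 t)
    · rw [Set.indicator_of_notMem h, mul_zero]
      exact mul_nonneg (hgdens _) (hw0 t)
  refine aux_lin _ _ _ (mul_pos hc₀ (lt_min hη₁ hη₂)) (fun v => ?_) (fun v => ?_)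
  · rw [hquad]
    have hs : 0 ≤ ∑ i, v i ^ 2 := Finset.sum_nonneg fun i _ => sq_nonneg _
    rw [mul_assoc]
    rcases le_total x (1 / 2) with hx2 | hx2
    · refine le_trans (mul_le_mul_of_nonneg_left ((mul_le_mul_of_nonneg_right
        (min_le_left _ _) hs).trans (hR v)) hc₀.le) (hlow' _ hiR ?_ v)
      rintro t ⟨h1, h2⟩
      have := mul_le_mul_of_nonneg_left h2 hapos.le
      have := mul_nonneg hapos.le h1
      exact ⟨by linarith [hx.1], by linarith⟩
    · refine le_trans (mul_le_mul_of_nonneg_left ((mul_le_mul_of_nonneg_right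
        (min_le_right _ _) hs).trans (hL v)) hc₀.le) (hlow' _ hiL ?_ v)
      rintro t ⟨h1, h2⟩
      have := mul_le_mul_of_nonneg_left h1 hapos.le
      have := mul_nonneg hapos.le (neg_nonneg.2 h2)
      exact ⟨by linarith, by linarith [hx.2]⟩
  · rw [hquad]
    have hs : 0 ≤ ∑ i, v i ^ 2 := Finset.sum_nonneg fun i _ => sq_nonneg _
    have hB0 : 0 ≤ B := (hgdens 0).trans (hgB 0)
    calc _ ≤ ∫ t, (((d : ℝ) + 1) * B * ∑ i, v i ^ 2) * w t := by
          refine integral_mono (aux_sq_int _ hi v) (hwInt.const_mul _) fun t => ?_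
          show _ ^ 2 * _ ≤ _
          by_cases h : w t = 0
          · simp [h]
          have ht := hwsupp h
          have h1 : (∑ i, v i * t ^ (i : ℕ)) ^ 2 ≤ (∑ i, v i ^ 2) * ((d : ℝ) + 1) := by
            refine (Finset.sum_mul_sq_le_sq_mul_sq _ _ _).trans
              (mul_le_mul_of_nonneg_left ?_ hs)
            calc ∑ i : Fin (d + 1), (t ^ (i : ℕ)) ^ 2 ≤ ∑ i : Fin (d + 1), (1 : ℝ) := by
                  refine Finset.sum_le_sum fun i _ => ?_
                  rw [← sq_abs, abs_pow]
                  exact pow_le_one₀ (by positivity)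
                    (pow_le_one₀ (abs_nonneg _) (abs_le.2 ht))
              _ = (d : ℝ) + 1 := by simp
          rw [← mul_assoc]
          refine mul_le_mul_of_nonneg_right ?_ (hw0 t)
          calc _ ≤ ((∑ i, v i ^ 2) * ((d : ℝ) + 1)) * B :=
                mul_le_mul h1 (hgB _) (hgdens _) (by positivity)
            _ = _ := by ring
      _ = _ := by rw [integral_const_mul, hwdens, mul_one]
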